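/- For every integer p ≥ 0 and every constant c > 0 there exist K < ∞ and ζ₀ > 0 such that for all m ≥ 1, all 0 < ζ ≤ ζ₀, and all x ∈ ℝ^m with Euclidean norm ‖x‖ ≤ c·ζ·√m, one has |L_m(x) − L̂_m^{(p)}(x)| ≤ K·ζ^{p+1}; in particular the constant K can be chosen independently of m. -/

import Mathlib

open MeasureTheory Finset

/-- The standard corner simplex `T_m = {λ ∈ ℝ^m : λ_i ≥ 0, Σ λ_i ≤ 1}`. -/
def cornerSimplex (m : ℕ) : Set (Fin m → ℝ) :=
  {l | (∀ j, 0 ≤ l j) ∧ ∑ j, l j ≤ 1}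

/-- The Laplace transform of the symmetric Dirichlet distribution:
`L_m(x₁,…,x_m) = m!·∫_{T_m} exp(−Σ_j x_j λ_j) dλ`. -/
noncomputable def dirichletLaplace (m : ℕ) (x : Fin m → ℝ) : ℝ :=
  (Nat.factorial m : ℝ) * ∫ l in cornerSimplex m, Real.exp (-∑ j, x j * l j)

/-- The degree-`p` Taylor polynomial of the Dirichlet Laplace transform at the origin:
`L̂_m^{(p)}(x) = m!·Σ_{ℓ=0}^{p} ∫_{T_m} (−⟨x,λ⟩)^ℓ/ℓ! dλ`. -/
noncomputable def dirichletLaplaceTaylor (m p : ℕ) (x : Fin m → ℝ) : ℝ :=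
  (Nat.factorial m : ℝ) * ∑ ℓ ∈ Finset.range (p + 1),
    ∫ l in cornerSimplex m, (-∑ j, x j * l j) ^ ℓ / (Nat.factorial ℓ : ℝ)

/-!
Dirichlet's formula `∫_{T_m} ∏ λ_j ^ a_j dλ = ∏ a_j! / (m + ∑ a_j)!` and the multinomial theorem
give the degree-`k` Taylor term of `L_m` in closed form: it is `m! / (m + k)!` times the complete
homogeneous symmetric polynomial of degree `k` in `-x`. That polynomial is at most `‖x‖₁ ^ k` in
absolute value and `m! / (m + k)! ≤ (m + 1) ^ (-k)`, so the Taylor series is dominated by the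
geometric series of ratio `‖x‖₁ / (m + 1)`. By Cauchy–Schwarz, `‖x‖₂ ≤ c ζ √m` makes this ratio at
most `c ζ`, whatever the dimension.
-/

lemma abs_sum_piAntidiag_prod_pow_le {ι R : Type*} [DecidableEq ι] [CommRing R] [LinearOrder R]
    [IsStrictOrderedRing R] (s : Finset ι) (y : ι → R) (k : ℕ) :
    |∑ a ∈ piAntidiag s k, ∏ j ∈ s, y j ^ a j| ≤ (∑ j ∈ s, |y j|) ^ k := by
  rw [sum_pow_eq_sum_piAntidiag]
  refine (abs_sum_le_sum_abs _ _).trans (sum_le_sum fun a _ ↦ ?_)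
  rw [abs_prod]
  simp only [abs_pow]
  exact le_mul_of_one_le_left (prod_nonneg fun j _ ↦ by positivity)
    (by exact_mod_cast Nat.multinomial_pos s a)

lemma sum_abs_le_mul_card_of_norm_le_mul_sqrt_card {ι : Type*} [Fintype ι]
    {x : EuclideanSpace ℝ ι} {C : ℝ} (hx : ‖x‖ ≤ C * √(Fintype.card ι)) :
    ∑ j, |x j| ≤ C * Fintype.card ι :=
  calc ∑ j, |x j| ≤ √(Fintype.card ι) * ‖x‖ := by
        simpa [EuclideanSpace.norm_eq] using
          Real.sum_mul_le_sqrt_mul_sqrt univ (fun _ ↦ 1) fun j ↦ |x j|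
    _ ≤ √(Fintype.card ι) * (C * √(Fintype.card ι)) := by gcongr
    _ = C * Fintype.card ι := by rw [mul_left_comm, Real.mul_self_sqrt (Nat.cast_nonneg _)]

lemma hasSum_integral_pow_div_factorial {α : Type*} [MeasurableSpace α] {μ : Measure α}
    [IsFiniteMeasure μ] {f : α → ℝ} {C : ℝ} (hf : AEStronglyMeasurable f μ)
    (hC : ∀ᵐ a ∂μ, |f a| ≤ C) :
    HasSum (fun k : ℕ ↦ ∫ a, f a ^ k / k.factorial ∂μ) (∫ a, Real.exp (f a) ∂μ) := by
  refine hasSum_integral_of_dominated_convergence (fun k _ ↦ C ^ k / k.factorial)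
    (fun k ↦ ((hf.aemeasurable.pow_const k).div_const _).aestronglyMeasurable) (fun k ↦ ?_)
    (.of_forall fun _ ↦ Real.summable_pow_div_factorial C) (integrable_const _)
    (.of_forall fun a ↦ ?_)
  · filter_upwards [hC] with a ha
    rw [norm_div, norm_pow, Real.norm_eq_abs, Real.norm_natCast]
    gcongr
  · rw [Real.exp_eq_exp_ℝ]
    exact NormedSpace.expSeries_div_hasSum_exp (f a)

lemma integral_pow_mul_one_sub_pow (a n : ℕ) :
    ∫ t in (0 : ℝ)..1, t ^ a * (1 - t) ^ n
      = (a.factorial * n.factorial : ℝ) / (a + n + 1).factorial := by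
  have beta_eq : Complex.betaIntegral (a + 1) (n + 1)
      = ((∫ t in (0 : ℝ)..1, t ^ a * (1 - t) ^ n : ℝ) : ℂ) := by
    rw [Complex.betaIntegral, ← intervalIntegral.integral_ofReal]
    simp only [add_sub_cancel_right, Complex.cpow_natCast]
    push_cast
    rfl
  have gamma_eq := Complex.betaIntegral_eq_Gamma_mul_div (a + 1) (n + 1)
    (by norm_cast; positivity) (by norm_cast; positivity)
  have add_eq : (a + 1 + (n + 1) : ℂ) = ((a + n + 1 : ℕ) : ℂ) + 1 := by push_cast; ring
  rw [beta_eq, add_eq, Complex.Gamma_nat_eq_factorial, Complex.Gamma_nat_eq_factorial,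
    Complex.Gamma_nat_eq_factorial] at gamma_eq
  refine Complex.ofReal_injective (gamma_eq.trans ?_)
  push_cast
  rfl

lemma integral_pow_mul_sub_pow (a n : ℕ) (s : ℝ) :
    ∫ t in (0 : ℝ)..s, t ^ a * (s - t) ^ n
      = (a.factorial * n.factorial : ℝ) / (a + n + 1).factorial * s ^ (a + n + 1) := by
  have rescale := intervalIntegral.mul_integral_comp_mul_left
    (f := fun t ↦ t ^ a * (s - t) ^ n) (a := 0) (b := 1) s
  rw [mul_zero, mul_one] at rescale
  have homogeneous (t : ℝ) :
      (s * t) ^ a * (s - s * t) ^ n = s ^ (a + n) * (t ^ a * (1 - t) ^ n) := by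
    rw [← mul_one_sub, mul_pow, mul_pow]
    ring
  simp only [← rescale, homogeneous, intervalIntegral.integral_const_mul,
    integral_pow_mul_one_sub_pow]
  ring

lemma integral_fin_succ_eq_integral_integral_cons {E : Type*} [NormedAddCommGroup E]
    [NormedSpace ℝ E] {m : ℕ} {f : (Fin (m + 1) → ℝ) → E} (hf : Integrable f) :
    ∫ l, f l = ∫ t : ℝ, ∫ y : Fin m → ℝ, f (Fin.cons t y) := by
  have preserving := (volume_preserving_piFinSuccAbove (fun _ : Fin (m + 1) ↦ ℝ) 0).symm
  rw [← preserving.integral_comp', Measure.volume_eq_prod,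
    integral_prod (fun z ↦ f _) (preserving.integrable_comp_of_integrable hf)]
  simp [Fin.insertNthEquiv]

/-- The corner simplex `s · T_m = {l : l_j ≥ 0, ∑ l_j ≤ s}`, empty for `s < 0`. The slices of
`T_{m+1}` orthogonal to the first axis are simplices `(1 - t) · T_m`, so inductions on the dimension
need the dilation parameter. -/
def dilatedCornerSimplex (m : ℕ) (s : ℝ) : Set (Fin m → ℝ) :=
  {l | (∀ j, 0 ≤ l j) ∧ ∑ j, l j ≤ s}

lemma dilatedCornerSimplex_one (m : ℕ) : dilatedCornerSimplex m 1 = cornerSimplex m :=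
  rfl

namespace dilatedCornerSimplex

variable {m : ℕ} {s : ℝ}

lemma apply_le_of_mem {l : Fin m → ℝ} (hl : l ∈ dilatedCornerSimplex m s) (j : Fin m) : l j ≤ s :=
  (single_le_sum (fun i _ ↦ hl.1 i) (mem_univ j)).trans hl.2

lemma isCompact : IsCompact (dilatedCornerSimplex m s) := by
  have closed : IsClosed (dilatedCornerSimplex m s) := by
    simp only [dilatedCornerSimplex, Set.ofPred_and, Set.ofPred_forall]
    exact (isClosed_iInter fun j ↦ isClosed_le (by fun_prop) (by fun_prop)).inter
      (isClosed_le (by fun_prop) (by fun_prop))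
  exact isCompact_Icc.of_isClosed_subset closed fun l hl ↦
    (⟨hl.1, apply_le_of_mem hl⟩ : l ∈ Set.Icc 0 fun _ ↦ s)

lemma measurableSet : MeasurableSet (dilatedCornerSimplex m s) :=
  isCompact.isClosed.measurableSet

lemma cons_mem_iff {t : ℝ} {y : Fin m → ℝ} :
    (Fin.cons t y : Fin (m + 1) → ℝ) ∈ dilatedCornerSimplex (m + 1) s
      ↔ t ∈ Set.Icc 0 s ∧ y ∈ dilatedCornerSimplex m (s - t) := by
  simp only [dilatedCornerSimplex, Set.mem_ofPred_eq, Fin.forall_fin_succ, Fin.sum_univ_succ,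
    Fin.cons_zero, Fin.cons_succ, Set.mem_Icc, le_sub_iff_add_le']
  refine ⟨fun ⟨⟨ht, hy⟩, hsum⟩ ↦ ⟨⟨ht, ?_⟩, hy, hsum⟩, fun ⟨⟨ht, _⟩, hy, hsum⟩ ↦ ⟨⟨ht, hy⟩, hsum⟩⟩
  linarith [sum_nonneg fun i (_ : i ∈ univ) ↦ hy i]

lemma setIntegral_succ {E : Type*} [NormedAddCommGroup E] [NormedSpace ℝ E]
    {f : (Fin (m + 1) → ℝ) → E} (hf : IntegrableOn f (dilatedCornerSimplex (m + 1) s)) :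
    ∫ l in dilatedCornerSimplex (m + 1) s, f l
      = ∫ t in Set.Icc 0 s, ∫ y in dilatedCornerSimplex m (s - t), f (Fin.cons t y) := by
  rw [← integral_indicator measurableSet,
    integral_fin_succ_eq_integral_integral_cons (hf.integrable_indicator measurableSet),
    ← integral_indicator measurableSet_Icc]
  refine integral_congr_ae (.of_forall fun t ↦ ?_)
  by_cases ht : t ∈ Set.Icc 0 s
  · simp only [Set.indicator_of_mem ht]
    rw [← integral_indicator measurableSet]
    refine integral_congr_ae (.of_forall fun y ↦ ?_)
    by_cases hy : y ∈ dilatedCornerSimplex m (s - t) <;>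
      simp [Set.indicator, cons_mem_iff, ht, hy]
  · simp [Set.indicator, cons_mem_iff, ht]

lemma setIntegral_prod_pow (a : Fin m → ℕ) (hs : 0 ≤ s) :
    ∫ l in dilatedCornerSimplex m s, ∏ j, l j ^ a j
      = (∏ j, ((a j).factorial : ℝ)) / (m + ∑ j, a j).factorial * s ^ (m + ∑ j, a j) := by
  induction m generalizing s with
  | zero =>
    have eq_univ : dilatedCornerSimplex 0 s = Set.univ := by
      simp [dilatedCornerSimplex, hs]
    simp [eq_univ, volume_pi, measureReal_def]
  | succ m ih =>
    have integrable : IntegrableOn (fun l : Fin (m + 1) → ℝ ↦ ∏ j, l j ^ a j)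
        (dilatedCornerSimplex (m + 1) s) :=
      (Continuous.continuousOn (by fun_prop)).integrableOn_compact isCompact
    have slice : ∀ t ∈ Set.Icc 0 s,
        ∫ y in dilatedCornerSimplex m (s - t), ∏ j, (Fin.cons t y : Fin (m + 1) → ℝ) j ^ a j
          = (∏ j : Fin m, ((a j.succ).factorial : ℝ)) / (m + ∑ j : Fin m, a j.succ).factorial
            * (t ^ a 0 * (s - t) ^ (m + ∑ j : Fin m, a j.succ)) := fun t ht ↦ by
      simp only [Fin.prod_univ_succ, Fin.cons_zero, Fin.cons_succ, integral_const_mul]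
      rw [ih _ (sub_nonneg.2 ht.2)]
      ring
    rw [setIntegral_succ integrable, setIntegral_congr_fun measurableSet_Icc slice,
      integral_const_mul, integral_Icc_eq_integral_Ioc, ← intervalIntegral.integral_of_le hs,
      integral_pow_mul_sub_pow]
    have degree : a 0 + (m + ∑ j : Fin m, a j.succ) + 1 = m + 1 + ∑ j, a j := by
      rw [Fin.sum_univ_succ]; ring
    rw [degree, Fin.prod_univ_succ]
    field_simp

end dilatedCornerSimplex

lemma isCompact_cornerSimplex (m : ℕ) : IsCompact (cornerSimplex m) :=
  dilatedCornerSimplex.isCompact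

lemma setIntegral_cornerSimplex_prod_pow {m : ℕ} (a : Fin m → ℕ) :
    ∫ l in cornerSimplex m, ∏ j, l j ^ a j
      = (∏ j, ((a j).factorial : ℝ)) / (m + ∑ j, a j).factorial := by
  simpa [dilatedCornerSimplex_one] using
    dilatedCornerSimplex.setIntegral_prod_pow a zero_le_one

lemma setIntegral_cornerSimplex_sum_mul_pow {m : ℕ} (y : Fin m → ℝ) (k : ℕ) :
    ∫ l in cornerSimplex m, (∑ j, y j * l j) ^ k
      = (k.factorial : ℝ) / (m + k).factorial * ∑ a ∈ piAntidiag univ k, ∏ j, y j ^ a j := by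
  have integrable (a : Fin m → ℕ) :
      IntegrableOn (fun l : Fin m → ℝ ↦ ∏ j, l j ^ a j) (cornerSimplex m) :=
    (Continuous.continuousOn (by fun_prop)).integrableOn_compact (isCompact_cornerSimplex m)
  simp only [sum_pow_eq_sum_piAntidiag, mul_pow, prod_mul_distrib, ← mul_assoc]
  rw [integral_finsetSum _ fun a _ ↦ (integrable a).const_mul _, mul_sum]
  refine sum_congr rfl fun a ha ↦ ?_
  obtain rfl : ∑ j, a j = k := (mem_piAntidiag.1 ha).1
  rw [integral_const_mul, setIntegral_cornerSimplex_prod_pow, ← Nat.multinomial_spec univ a]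
  push_cast
  ring

lemma abs_sum_mul_le_of_mem_cornerSimplex {m : ℕ} (y : Fin m → ℝ) {l : Fin m → ℝ}
    (hl : l ∈ cornerSimplex m) : |∑ j, y j * l j| ≤ ∑ j, |y j| := by
  refine (abs_sum_le_sum_abs _ _).trans (sum_le_sum fun j _ ↦ ?_)
  rw [abs_mul, abs_of_nonneg (hl.1 j)]
  exact mul_le_of_le_one_right (abs_nonneg _) (dilatedCornerSimplex.apply_le_of_mem hl j)

/-- The degree-`k` homogeneous component of the Taylor series of `dirichletLaplace m` at the
origin: the terms with `k ≤ p` add up to `dirichletLaplaceTaylor m p`. -/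
noncomputable def dirichletLaplaceTaylorTerm (m k : ℕ) (x : Fin m → ℝ) : ℝ :=
  m.factorial * ∫ l in cornerSimplex m, (-∑ j, x j * l j) ^ k / k.factorial

lemma dirichletLaplaceTaylor_eq_sum_range (m p : ℕ) (x : Fin m → ℝ) :
    dirichletLaplaceTaylor m p x = ∑ k ∈ range (p + 1), dirichletLaplaceTaylorTerm m k x :=
  mul_sum ..

lemma hasSum_dirichletLaplaceTaylorTerm (m : ℕ) (x : Fin m → ℝ) :
    HasSum (fun k ↦ dirichletLaplaceTaylorTerm m k x) (dirichletLaplace m x) := by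
  have compact := isCompact_cornerSimplex m
  have : IsFiniteMeasure (volume.restrict (cornerSimplex m)) :=
    isFiniteMeasure_restrict.2 compact.measure_ne_top
  refine (hasSum_integral_pow_div_factorial (C := ∑ j, |x j|)
    (Continuous.aestronglyMeasurable (by fun_prop)) ?_).mul_left _
  refine ae_restrict_of_forall_mem compact.measurableSet fun l hl ↦ ?_
  rw [abs_neg]
  exact abs_sum_mul_le_of_mem_cornerSimplex x hl

lemma dirichletLaplaceTaylorTerm_eq (m k : ℕ) (x : Fin m → ℝ) :
    dirichletLaplaceTaylorTerm m k x
      = (m.factorial : ℝ) / (m + k).factorial * ∑ a ∈ piAntidiag univ k, ∏ j, (-x j) ^ a j := by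
  simp only [dirichletLaplaceTaylorTerm, ← sum_neg_distrib, ← neg_mul]
  rw [integral_div, setIntegral_cornerSimplex_sum_mul_pow]
  field_simp

lemma abs_dirichletLaplaceTaylorTerm_le (m k : ℕ) (x : Fin m → ℝ) :
    |dirichletLaplaceTaylorTerm m k x| ≤ ((∑ j, |x j|) / (m + 1)) ^ k := by
  have factorial_div_le : (m.factorial : ℝ) / (m + k).factorial ≤ 1 / (m + 1) ^ k := by
    rw [div_le_div_iff₀ (by positivity) (by positivity), one_mul]
    exact_mod_cast Nat.factorial_mul_pow_le_factorial
  calc |dirichletLaplaceTaylorTerm m k x|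
      = (m.factorial : ℝ) / (m + k).factorial * |∑ a ∈ piAntidiag univ k, ∏ j, (-x j) ^ a j| := by
        rw [dirichletLaplaceTaylorTerm_eq, abs_mul, abs_of_nonneg (by positivity)]
    _ ≤ 1 / (m + 1) ^ k * (∑ j, |-x j|) ^ k := by
        gcongr
        exact abs_sum_piAntidiag_prod_pow_le univ _ k
    _ = ((∑ j, |x j|) / (m + 1)) ^ k := by
        simp only [abs_neg, div_pow]
        ring

theorem dirichletLaplace_taylor_error_uniform_general {m : ℕ} (p : ℕ) {x : Fin m → ℝ} {r : ℝ}
    (hr : r < 1) (hx : ∑ j, |x j| ≤ r * (m + 1)) :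
    |dirichletLaplace m x - dirichletLaplaceTaylor m p x| ≤ r ^ (p + 1) / (1 - r) := by
  have term_le (k : ℕ) : ‖dirichletLaplaceTaylorTerm m k x‖ ≤ 1 * r ^ k := by
    rw [one_mul]
    refine (abs_dirichletLaplaceTaylorTerm_le m k x).trans ?_
    gcongr
    exact (div_le_iff₀ (by positivity)).2 hx
  rw [abs_sub_comm, dirichletLaplaceTaylor_eq_sum_range]
  simpa using norm_sub_le_of_geometric_bound_of_hasSum hr term_le
    (hasSum_dirichletLaplaceTaylorTerm m x) (p + 1)

/-- **Uniform-in-`m` Taylor error bound.** For every `p ≥ 0` and every `c > 0` there exist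
`K < ∞` and `ζ₀ > 0` such that for all `m ≥ 1`, all `0 < ζ ≤ ζ₀` and all `x ∈ ℝ^m` with
Euclidean norm `‖x‖ ≤ c·ζ·√m`, one has `|L_m(x) − L̂_m^{(p)}(x)| ≤ K·ζ^{p+1}`; in particular
the constant `K` can be chosen independently of `m`. -/
theorem dirichletLaplace_taylor_error_uniform (p : ℕ) (c : ℝ) (hc : 0 < c) :
    ∃ K ζ₀ : ℝ, 0 < ζ₀ ∧
      ∀ m : ℕ, 1 ≤ m → ∀ ζ : ℝ, 0 < ζ → ζ ≤ ζ₀ →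
        ∀ x : EuclideanSpace ℝ (Fin m), ‖x‖ ≤ c * ζ * Real.sqrt m →
          |dirichletLaplace m (fun j => x j) - dirichletLaplaceTaylor m p (fun j => x j)|
            ≤ K * ζ ^ (p + 1) := by
  refine ⟨2 * c ^ (p + 1), 1 / (2 * c), by positivity, fun m _ ζ hζ hζ₀ x hx ↦ ?_⟩
  have half : c * ζ ≤ 1 / 2 := by
    rw [le_div_iff₀ (by positivity)] at hζ₀
    linarith
  have l1_bound : ∑ j, |x j| ≤ c * ζ * m := by
    simpa using
      sum_abs_le_mul_card_of_norm_le_mul_sqrt_card (x := x) (C := c * ζ) (by simpa using hx)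
  calc |dirichletLaplace m (fun j => x j) - dirichletLaplaceTaylor m p (fun j => x j)|
      ≤ (c * ζ) ^ (p + 1) / (1 - c * ζ) :=
        dirichletLaplace_taylor_error_uniform_general p (by linarith)
          (l1_bound.trans (by gcongr; linarith))
    _ ≤ (c * ζ) ^ (p + 1) / (1 / 2) := by gcongr; linarith
    _ = 2 * c ^ (p + 1) * ζ ^ (p + 1) := by ring
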